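/- Let Γ be an n-colored graph with vertex set V = V₁ ⊔ ⋯ ⊔ Vₙ (no edges within a color class) such that (1) every color class Vᵢ has at least 2 vertices, and (2) for every i and every choice of 2(n−1) vertices v¹,…,v^{2(n−1)} outside Vᵢ there exist two distinct vertices vᵢ, wᵢ ∈ Vᵢ adjacent to every v^j. Then the clique complex K(Γ) (whose p-simplices are the (p+1)-sets of pairwise adjacent vertices) is simply connected when n ≥ 3. -/

import Mathlib

/-- The geometric realization of the clique (flag) complex `K(Γ)` of a simple graph `Γ`:
formal convex combinations of vertices whose support is a clique, topologized as a subspace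
of the product `V → ℝ`. Its `p`-simplices are the `(p+1)`-sets of pairwise adjacent
vertices. -/
def CliqueComplex {V : Type*} (G : SimpleGraph V) : Type _ :=
  {f : V →₀ ℝ // (∀ v, 0 ≤ f v) ∧ (f.sum fun _ x => x) = 1 ∧
    G.IsClique (f.support : Set V)}

noncomputable instance {V : Type*} (G : SimpleGraph V) : TopologicalSpace (CliqueComplex G) :=
  TopologicalSpace.induced (fun f => (f.1 : V → ℝ)) Pi.topologicalSpace

/-!
The open stars of the vertices form an open cover of `K(Γ)` by simply connected sets, two or three
of which meet exactly when their vertices span a simplex. Homotopy classes of paths can therefore be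
transported along the edges of `Γ`, compatibly with triangles. Since any four vertices missing a
color have a common neighbor of that color, any two edge paths of length two with the same ends are
homotopic, and an edge path of length three is homotopic to one of length two. Transport from a
fixed vertex along paths of length two is hence independent of the path, which makes every two paths
in `K(Γ)` with the same ends homotopic.
-/

section TrivialHolonomy

open CategoryTheory

variable {V : Type*} {G : SimpleGraph V} {C : Type*} [Category* C] {α : Type*}

/-- Transport along the edges of a graph with values in a category, flat in the sense that it
commutes around every triangle. It models the homotopy classes of edge paths in the clique complex;
backtracking along an edge is not required to be trivial. -/
structure FlatTransport (G : SimpleGraph V) (C : Type*) [Category* C] where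
  obj : V → C
  map : ∀ {v w : V}, G.Adj v w → (obj v ⟶ obj w)
  map_comp_map : ∀ {u v w : V} (huv : G.Adj u v) (hvw : G.Adj v w) (huw : G.Adj u w),
    map huv ≫ map hvw = map huw

/-- Transport from `a` to a vertex can be chosen compatibly with all edges, so that it does not
depend on the edge path. -/
def FlatTransport.HasTrivialHolonomy (F : FlatTransport G C) (a : V) : Prop :=
  ∃ φ : ∀ v, F.obj a ⟶ F.obj v, ∀ v w (h : G.Adj v w), φ v ≫ F.map h = φ w

/-- Condition (2) of the theorem for at most `k` vertices and a single common neighbor: any such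
vertices outside a color class have a common neighbor in that class. For no vertices at all, this
says that the color class is nonempty. -/
def HasColoredCommonNeighbors (c : G.Coloring α) (k : ℕ) : Prop :=
  ∀ (i : α) (s : Finset V), s.card ≤ k → (∀ v ∈ s, c v ≠ i) → ∃ y, c y = i ∧ ∀ v ∈ s, G.Adj y v

lemma HasColoredCommonNeighbors.mono {c : G.Coloring α} {k l : ℕ}
    (hc : HasColoredCommonNeighbors c l) (hkl : k ≤ l) : HasColoredCommonNeighbors c k :=
  fun i s hs => hc i s (hs.trans hkl)

lemma hasColoredCommonNeighbors_of_forall_fin {c : G.Coloring α} {k : ℕ}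
    (hne : ∀ i, ∃ v, c v = i)
    (h : ∀ i (vs : Fin k → V), (∀ j, c (vs j) ≠ i) → ∃ y, c y = i ∧ ∀ j, G.Adj y (vs j)) :
    HasColoredCommonNeighbors c k := by
  intro i s hs hsi
  rcases s.eq_empty_or_nonempty with rfl | ⟨v₀, hv₀⟩
  · simpa using hne i
  have : Nonempty s := ⟨⟨v₀, hv₀⟩⟩
  obtain ⟨e⟩ : Nonempty (s ↪ Fin k) :=
    Function.Embedding.nonempty_of_card_le (by simpa using hs)
  let enum : Fin k → s := Function.invFun e
  obtain ⟨y, hy, hadj⟩ := h i (fun j => enum j) fun j => hsi _ (enum j).2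
  refine ⟨y, hy, fun v hv => ?_⟩
  obtain ⟨j, hj⟩ := Function.invFun_surjective e.injective ⟨v, hv⟩
  have henum : (enum j : V) = v := congrArg Subtype.val hj
  exact henum ▸ hadj j

lemma HasColoredCommonNeighbors.exists_adj {c : G.Coloring α}
    (hc : HasColoredCommonNeighbors c 4) {i : α} {p q r s : V} (hp : c p ≠ i) (hq : c q ≠ i)
    (hr : c r ≠ i) (hs : c s ≠ i) :
    ∃ y, c y = i ∧ G.Adj y p ∧ G.Adj y q ∧ G.Adj y r ∧ G.Adj y s := by
  classical
  simpa using hc i {p, q, r, s} Finset.card_le_four (by simp [hp, hq, hr, hs])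

namespace FlatTransport

variable (F : FlatTransport G C) {c : G.Coloring α}

lemma map_comp_map_eq_of_cone {a b d y : V} (hab : G.Adj a b) (hbd : G.Adj b d)
    (hya : G.Adj y a) (hyb : G.Adj y b) (hyd : G.Adj y d) :
    F.map hab ≫ F.map hbd = F.map hya.symm ≫ F.map hyd := by
  rw [← F.map_comp_map hya.symm hyb hab, Category.assoc, F.map_comp_map hyb hbd hyd]

lemma map_comp_map_eq_of_missing_color (hc : HasColoredCommonNeighbors c 4) {i : α}
    {a b b' d : V} (hab : G.Adj a b) (hbd : G.Adj b d) (hab' : G.Adj a b') (hbd' : G.Adj b' d)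
    (ha : c a ≠ i) (hb : c b ≠ i) (hb' : c b' ≠ i) (hd : c d ≠ i) :
    F.map hab ≫ F.map hbd = F.map hab' ≫ F.map hbd' := by
  obtain ⟨y, -, hya, hyb, hyb', hyd⟩ := hc.exists_adj ha hb hb' hd
  rw [F.map_comp_map_eq_of_cone hab hbd hya hyb hyd,
    F.map_comp_map_eq_of_cone hab' hbd' hya hyb' hyd]

-- In the two cases where every color may occur, one vertex of the square is first traded for a
-- vertex `x` whose color already occurs, which frees a color.
theorem map_comp_map_eq_map_comp_map (hα : 3 ≤ ENat.card α)
    (hc : HasColoredCommonNeighbors c 4) {a b b' d : V} (hab : G.Adj a b) (hbd : G.Adj b d)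
    (hab' : G.Adj a b') (hbd' : G.Adj b' d) :
    F.map hab ≫ F.map hbd = F.map hab' ≫ F.map hbd' := by
  by_cases hbb' : c b = c b'
  · by_cases had : c a = c d
    · obtain ⟨i, hia, hib⟩ := ENat.exists_ne_ne_of_three_le hα (c a) (c b)
      exact F.map_comp_map_eq_of_missing_color hc hab hbd hab' hbd' hia.symm hib.symm
        (hbb' ▸ hib.symm) (had ▸ hia.symm)
    · obtain ⟨x, -, hxa, hxb, hxb', -⟩ :=
        hc.exists_adj had (c.valid hbd) (c.valid hbd') (c.valid hbd')
      have hsquare : F.map hxb ≫ F.map hbd = F.map hxb' ≫ F.map hbd' :=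
        F.map_comp_map_eq_of_missing_color hc hxb hbd hxb' hbd' (c.valid hxa)
          (c.valid hab.symm) (c.valid hab'.symm) (Ne.symm had)
      rw [← F.map_comp_map hxa.symm hxb hab, ← F.map_comp_map hxa.symm hxb' hab', Category.assoc,
        Category.assoc, hsquare]
  · obtain ⟨x, -, hxa, hxb, hxd, -⟩ :=
      hc.exists_adj (c.valid hab') hbb' (c.valid hbd'.symm) (c.valid hbd'.symm)
    calc F.map hab ≫ F.map hbd = F.map hxa.symm ≫ F.map hxd :=
          F.map_comp_map_eq_of_cone hab hbd hxa hxb hxd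
      _ = F.map hab' ≫ F.map hbd' :=
          F.map_comp_map_eq_of_missing_color hc hxa.symm hxd hab' hbd' (c.valid hab)
            (c.valid hxb) (Ne.symm hbb') (c.valid hbd.symm)

theorem exists_map_comp_map_comp_map_eq (hα : 3 ≤ ENat.card α)
    (hc : HasColoredCommonNeighbors c 4) {a u v w : V} (hau : G.Adj a u) (huv : G.Adj u v)
    (hvw : G.Adj v w) :
    ∃ (y : V) (hay : G.Adj a y) (hyw : G.Adj y w),
      F.map hau ≫ F.map huv ≫ F.map hvw = F.map hay ≫ F.map hyw := by
  by_cases hmissing : ∃ i, i ≠ c a ∧ i ≠ c v ∧ i ≠ c w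
  · obtain ⟨i, hia, hiv, hiw⟩ := hmissing
    obtain ⟨y, -, hya, hyv, hyw, -⟩ := hc.exists_adj hia.symm hiv.symm hiw.symm hiw.symm
    refine ⟨y, hya.symm, hyw, ?_⟩
    rw [← Category.assoc, F.map_comp_map_eq_map_comp_map hα hc hau huv hya.symm hyv,
      Category.assoc, F.map_comp_map hyv hvw hyw]
  · have hcolors : c a ≠ c v ∧ c a ≠ c w := by
      obtain ⟨i, hiv, hiw⟩ := ENat.exists_ne_ne_of_three_le hα (c v) (c w)
      have hia : i = c a := by_contra fun hia => hmissing ⟨i, hia, hiv, hiw⟩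
      exact hia ▸ ⟨hiv, hiw⟩
    obtain ⟨x, -, hxa, hxv, -⟩ :=
      hc.exists_adj hcolors.2 (c.valid hvw) (c.valid hvw) (c.valid hvw)
    obtain ⟨y, -, hya, hyw, hyx, -⟩ :=
      hc.exists_adj hcolors.1 (c.valid hvw.symm) (c.valid hxv) (c.valid hxv)
    refine ⟨y, hya.symm, hyw, ?_⟩
    calc F.map hau ≫ F.map huv ≫ F.map hvw
        = F.map hxa.symm ≫ F.map hxv ≫ F.map hvw := by
          simp only [← Category.assoc, F.map_comp_map_eq_map_comp_map hα hc hau huv hxa.symm hxv]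
      _ = F.map hxa.symm ≫ F.map hyx.symm ≫ F.map hyw := by
          rw [F.map_comp_map_eq_map_comp_map hα hc hxv hvw hyx.symm hyw]
      _ = F.map hya.symm ≫ F.map hyw := by
          rw [← Category.assoc, F.map_comp_map hxa.symm hyx.symm hya.symm]

theorem hasTrivialHolonomy (hα : 3 ≤ ENat.card α) (hc : HasColoredCommonNeighbors c 4) (a : V) :
    F.HasTrivialHolonomy a := by
  have hmid : ∀ v, ∃ u, G.Adj a u ∧ G.Adj u v := fun v => by
    obtain ⟨i, hia, hiv⟩ := ENat.exists_ne_ne_of_three_le hα (c a) (c v)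
    obtain ⟨u, -, hua, huv, -⟩ := hc.exists_adj hia.symm hiv.symm hiv.symm hiv.symm
    exact ⟨u, hua.symm, huv⟩
  choose u hau huv using hmid
  refine ⟨fun v => F.map (hau v) ≫ F.map (huv v), fun v w hvw => ?_⟩
  obtain ⟨y, hay, hyw, hshorten⟩ :=
    F.exists_map_comp_map_comp_map_eq hα hc (hau v) (huv v) hvw
  rw [Category.assoc, hshorten, F.map_comp_map_eq_map_comp_map hα hc hay hyw]

end FlatTransport

end TrivialHolonomy

section GoodCover

open CategoryTheory
open FundamentalGroupoid (fromPath)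

variable {X : Type*} [TopologicalSpace X]

lemma simplyConnectedSpace_of_forall_path (a : X)
    (Φ : ∀ x, FundamentalGroupoid.mk a ⟶ FundamentalGroupoid.mk x)
    (hΦ : ∀ {x y : X} (γ : Path x y), Φ x ≫ fromPath (.mk γ) = Φ y) :
    SimplyConnectedSpace X := by
  refine (simply_connected_iff_unique_homotopic X).2
    ⟨⟨a⟩, fun x y => ⟨⟨⟨inv (Φ x) ≫ Φ y⟩, fun γ => ?_⟩⟩⟩
  induction γ using Path.Homotopic.Quotient.ind with
  | mk γ => exact (IsIso.eq_inv_comp _).2 (hΦ γ)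

/-- By the Lebesgue number lemma, every path is a concatenation of paths in members of the cover. -/
lemma comp_fromPath_eq_of_open_cover {ι : Type*} {U : ι → Set X} (hopen : ∀ i, IsOpen (U i))
    (hcover : ∀ x, ∃ i, x ∈ U i) {a : X}
    (Φ : ∀ x, FundamentalGroupoid.mk a ⟶ FundamentalGroupoid.mk x)
    (hΦ : ∀ i {x y : X} (γ : Path x y), (∀ t, γ t ∈ U i) → Φ x ≫ fromPath (.mk γ) = Φ y)
    {x y : X} (γ : Path x y) : Φ x ≫ fromPath (.mk γ) = Φ y := by
  obtain ⟨t, ht₀, ht_mono, ⟨n, hn⟩, ht⟩ := exists_monotone_Icc_subset_open_cover_unitInterval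
    (c := fun i => γ ⁻¹' U i) (fun i => (hopen i).preimage γ.continuous)
    (fun r _ => Set.mem_iUnion.2 (hcover (γ r)))
  have hinitial : ∀ m, Φ (γ (t 0)) ≫ fromPath (.mk (γ.subpath (t 0) (t m))) = Φ (γ (t m)) := by
    intro m
    induction m with
    | zero => rw [Path.subpath_self]; exact Category.comp_id _
    | succ m ih =>
      obtain ⟨i, hi⟩ := ht m
      have hstep : Φ (γ (t m)) ≫ fromPath (.mk (γ.subpath (t m) (t (m + 1)))) =
          Φ (γ (t (m + 1))) := by
        refine hΦ i _ (Set.range_subset_iff.1 ?_)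
        rw [Path.range_subpath_of_le γ _ _ (ht_mono m.le_succ)]
        exact Set.image_subset_iff.2 hi
      have hconcat : fromPath (.mk (γ.subpath (t 0) (t m))) ≫
          fromPath (.mk (γ.subpath (t m) (t (m + 1)))) =
            fromPath (.mk (γ.subpath (t 0) (t (m + 1)))) :=
        Path.Homotopic.Quotient.eq.2
          ⟨Path.Homotopy.subpathTransSubpath γ (t 0) (t m) (t (m + 1))⟩
      rw [← hconcat, ← Category.assoc, ih, hstep]
  have hcast : ∀ {x' y' : X} (hx : x' = x) (hy : y' = y),
      Φ x' ≫ fromPath (.mk (γ.cast hx hy)) = Φ y' → Φ x ≫ fromPath (.mk γ) = Φ y := by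
    rintro _ _ rfl rfl h
    exact h
  have hall := hinitial n
  rw [ht₀, hn n le_rfl, Path.subpath_zero_one] at hall
  exact hcast _ _ hall

lemma fromPath_eq_of_forall_mem {U : Set X} (hU : IsSimplyConnected U) {x y : X} {γ δ : Path x y}
    (hγ : ∀ t, γ t ∈ U) (hδ : ∀ t, δ t ∈ U) : fromPath (.mk γ) = fromPath (.mk δ) := by
  have := hU.simplyConnectedSpace
  have hx : x ∈ U := γ.source ▸ hγ 0
  have hy : y ∈ U := γ.target ▸ hγ 1
  let restrict (ε : Path x y) (hε : ∀ t, ε t ∈ U) : Path (⟨x, hx⟩ : U) ⟨y, hy⟩ :=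
    { toFun t := ⟨ε t, hε t⟩
      source' := Subtype.ext ε.source
      target' := Subtype.ext ε.target }
  exact Path.Homotopic.Quotient.eq.2 <|
    (SimplyConnectedSpace.paths_homotopic (restrict γ hγ) (restrict δ hδ)).map
      ⟨Subtype.val, continuous_subtype_val⟩

/-- The unique homotopy class of paths inside a simply connected set `U` between two points of `U`,
as a class of paths in the ambient space. -/
noncomputable def pathClass {U : Set X} (hU : IsSimplyConnected U) {x y : X} (hx : x ∈ U)
    (hy : y ∈ U) : FundamentalGroupoid.mk x ⟶ FundamentalGroupoid.mk y :=
  fromPath (.mk (hU.isPathConnected.joinedIn x hx y hy).somePath)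

section PathClass

variable {U W : Set X} (hU : IsSimplyConnected U) {x y z : X}

lemma pathClass_eq_fromPath (hx : x ∈ U) (hy : y ∈ U) (γ : Path x y) (hγ : ∀ t, γ t ∈ U) :
    pathClass hU hx hy = fromPath (.mk γ) :=
  fromPath_eq_of_forall_mem hU (JoinedIn.somePath_mem _) hγ

lemma pathClass_self (hx : x ∈ U) : pathClass hU hx hx = 𝟙 _ :=
  pathClass_eq_fromPath hU hx hx (Path.refl x) fun _ => hx

lemma pathClass_comp_pathClass (hx : x ∈ U) (hy : y ∈ U) (hz : z ∈ U) :
    pathClass hU hx hy ≫ pathClass hU hy hz = pathClass hU hx hz := by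
  let γ := (hU.isPathConnected.joinedIn x hx y hy).somePath
  let δ := (hU.isPathConnected.joinedIn y hy z hz).somePath
  refine (pathClass_eq_fromPath hU hx hz (γ.trans δ) (Set.range_subset_iff.1 ?_)).symm
  rw [Path.trans_range]
  exact Set.union_subset (Set.range_subset_iff.2 (JoinedIn.somePath_mem _))
    (Set.range_subset_iff.2 (JoinedIn.somePath_mem _))

lemma pathClass_eq_pathClass (hW : IsSimplyConnected W) (h : JoinedIn (U ∩ W) x y) :
    pathClass hU h.source_mem.1 h.target_mem.1 = pathClass hW h.source_mem.2 h.target_mem.2 :=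
  (pathClass_eq_fromPath hU _ _ h.somePath fun t => (h.somePath_mem t).1).trans
    (pathClass_eq_fromPath hW _ _ h.somePath fun t => (h.somePath_mem t).2).symm

end PathClass

variable {V : Type*} {G : SimpleGraph V} {U : V → Set X}

/-- An open cover by simply connected sets, indexed by the vertices of a graph, whose nerve has the
same vertices, edges and triangles as the clique complex of the graph, and in which the
intersections along edges are path connected. -/
structure IsGoodCover (G : SimpleGraph V) (U : V → Set X) : Prop where
  isOpen : ∀ v, IsOpen (U v)
  exists_mem : ∀ x, ∃ v, x ∈ U v
  isSimplyConnected : ∀ v, IsSimplyConnected (U v)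
  adj : ∀ {v w x}, x ∈ U v → x ∈ U w → v ≠ w → G.Adj v w
  isPathConnected_inter : ∀ {v w}, G.Adj v w → IsPathConnected (U v ∩ U w)
  exists_mem_of_triangle : ∀ {u v w}, G.Adj u v → G.Adj v w → G.Adj u w →
    ∃ x, x ∈ U u ∧ x ∈ U v ∧ x ∈ U w

namespace IsGoodCover

variable (h : IsGoodCover G U) {u v w : V} {x y : X}

/-- A base point chosen in each member of the cover. -/
noncomputable def base (v : V) : X := (h.isSimplyConnected v).nonempty.some

lemma base_mem (v : V) : h.base v ∈ U v := (h.isSimplyConnected v).nonempty.some_mem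

/-- The class of paths between two base points that run in `U v` as far as `x` and in `U w` from
there on. -/
noncomputable def via (hv : x ∈ U v) (hw : x ∈ U w) :
    FundamentalGroupoid.mk (h.base v) ⟶ FundamentalGroupoid.mk (h.base w) :=
  pathClass (h.isSimplyConnected v) (h.base_mem v) hv ≫
    pathClass (h.isSimplyConnected w) hw (h.base_mem w)

lemma via_eq_via (hvw : G.Adj v w) (hxv : x ∈ U v) (hxw : x ∈ U w) (hyv : y ∈ U v)
    (hyw : y ∈ U w) : h.via hxv hxw = h.via hyv hyw := by
  have hxy : pathClass (h.isSimplyConnected v) hxv hyv =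
      pathClass (h.isSimplyConnected w) hxw hyw :=
    pathClass_eq_pathClass _ _ <|
      (h.isPathConnected_inter hvw).joinedIn x ⟨hxv, hxw⟩ y ⟨hyv, hyw⟩
  unfold via
  rw [← pathClass_comp_pathClass _ (h.base_mem v) hxv hyv, hxy, Category.assoc,
    pathClass_comp_pathClass]

lemma via_comp_pathClass (hv : x ∈ U v) (hw : x ∈ U w) :
    h.via hv hw ≫ pathClass (h.isSimplyConnected w) (h.base_mem w) hw =
      pathClass (h.isSimplyConnected v) (h.base_mem v) hv := by
  rw [via, Category.assoc, pathClass_comp_pathClass, pathClass_self, Category.comp_id]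

lemma via_comp_via (hu : x ∈ U u) (hv : x ∈ U v) (hw : x ∈ U w) :
    h.via hu hv ≫ h.via hv hw = h.via hu hw := by
  change _ ≫ pathClass _ _ _ ≫ pathClass _ _ _ = _
  rw [← Category.assoc, h.via_comp_pathClass, via]

/-- Transport between the base points of a good cover, along paths that cross each edge in the
intersection of the corresponding two members. -/
noncomputable def flatTransport : FlatTransport G (FundamentalGroupoid X) where
  obj v := .mk (h.base v)
  map hvw :=
    have hmem := (h.isPathConnected_inter hvw).nonempty.some_mem
    h.via hmem.1 hmem.2
  map_comp_map huv hvw huw := by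
    obtain ⟨x, hxu, hxv, hxw⟩ := h.exists_mem_of_triangle huv hvw huw
    rw [h.via_eq_via huv _ _ hxu hxv, h.via_eq_via hvw _ _ hxv hxw, h.via_eq_via huw _ _ hxu hxw,
      via_comp_via]

lemma flatTransport_map (hvw : G.Adj v w) (hv : x ∈ U v) (hw : x ∈ U w) :
    h.flatTransport.map hvw = h.via hv hw :=
  h.via_eq_via hvw _ _ hv hw

theorem simplyConnectedSpace {a : V} (ha : h.flatTransport.HasTrivialHolonomy a) :
    SimplyConnectedSpace X := by
  obtain ⟨φ, hφ⟩ : ∃ φ : ∀ v, FundamentalGroupoid.mk (h.base a) ⟶ .mk (h.base v),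
      ∀ {v w x} (hv : x ∈ U v) (hw : x ∈ U w), G.Adj v w → φ v ≫ h.via hv hw = φ w :=
    ha.imp fun φ hφ v w x hv hw hvw => h.flatTransport_map hvw hv hw ▸ hφ v w hvw
  let extend {x : X} (v : V) (hx : x ∈ U v) :
      FundamentalGroupoid.mk (h.base a) ⟶ FundamentalGroupoid.mk x :=
    φ v ≫ pathClass (h.isSimplyConnected v) (h.base_mem v) hx
  have hextend : ∀ {x : X} {v w : V} (hv : x ∈ U v) (hw : x ∈ U w),
      extend v hv = extend w hw := by
    intro x v w hv hw
    by_cases hne : v = w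
    · subst hne; rfl
    · simp only [extend]
      rw [← hφ hv hw (h.adj hv hw hne), Category.assoc, h.via_comp_pathClass]
  choose s hs using h.exists_mem
  refine simplyConnectedSpace_of_forall_path (h.base a) (fun x => extend (s x) (hs x)) fun γ =>
    comp_fromPath_eq_of_open_cover h.isOpen h.exists_mem (fun x => extend (s x) (hs x)) ?_ γ
  intro v x y γ hγ
  have hx : x ∈ U v := γ.source ▸ hγ 0
  have hy : y ∈ U v := γ.target ▸ hγ 1
  rw [hextend (hs x) hx, hextend (hs y) hy,
    ← pathClass_eq_fromPath (h.isSimplyConnected v) hx hy γ hγ]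
  simp only [extend, Category.assoc, pathClass_comp_pathClass]

end IsGoodCover

end GoodCover

section OpenStar

open Topology

variable {V : Type*} {G : SimpleGraph V}

namespace CliqueComplex

lemma isEmbedding_coe :
    IsEmbedding (fun f : CliqueComplex G => (f.1 : V → ℝ)) :=
  ⟨⟨rfl⟩, DFunLike.coe_injective.comp Subtype.val_injective⟩

lemma continuous_apply (v : V) : Continuous fun f : CliqueComplex G => f.1 v :=
  (_root_.continuous_apply v).comp isEmbedding_coe.continuous

lemma coe_pos {f : CliqueComplex G} {v : V} (hv : v ∈ f.1.support) : 0 < f.1 v :=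
  (f.2.1 v).lt_of_ne' (Finsupp.mem_support_iff.1 hv)

lemma exists_mem_support (f : CliqueComplex G) : ∃ v, v ∈ f.1.support := by
  by_contra! h
  have hzero : f.1 = 0 := Finsupp.support_eq_empty.1 (Finset.eq_empty_of_forall_notMem h)
  simpa [hzero] using f.2.2.1

lemma exists_coe_eq_convexCombination (f g : CliqueComplex G)
    (hfg : G.IsClique (f.1.support ∪ g.1.support : Set V)) {a b : ℝ} (ha : 0 ≤ a) (hb : 0 ≤ b)
    (hab : a + b = 1) : ∃ e : CliqueComplex G, e.1 = a • f.1 + b • g.1 := by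
  classical
  refine ⟨⟨a • f.1 + b • g.1, fun v => ?_, ?_, hfg.subset ?_⟩, rfl⟩
  · exact add_nonneg (mul_nonneg ha (f.2.1 v)) (mul_nonneg hb (g.2.1 v))
  · rw [Finsupp.sum_add_index' (by simp) (by simp), Finsupp.sum_smul_index (by simp),
      Finsupp.sum_smul_index (by simp), ← Finsupp.mul_sum, ← Finsupp.mul_sum, f.2.2.1, g.2.2.1,
      mul_one, mul_one, hab]
  · rw [← Finset.coe_union, Finset.coe_subset]
    exact Finsupp.support_add.trans
      (Finset.union_subset_union Finsupp.support_smul Finsupp.support_smul)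

lemma exists_support_eq {s : Finset V} (hs : s.Nonempty) (hclique : G.IsClique (s : Set V)) :
    ∃ f : CliqueComplex G, f.1.support = s := by
  classical
  have hcard : (s.card : ℝ) ≠ 0 := by exact_mod_cast hs.card_ne_zero
  let barycenter : V →₀ ℝ := Finsupp.indicator s fun _ _ => (s.card : ℝ)⁻¹
  have hsupport : barycenter.support = s := by
    ext v
    simp [barycenter, hcard, Finsupp.indicator_apply]
  refine ⟨⟨barycenter, fun v => ?_, ?_, hsupport ▸ hclique⟩, hsupport⟩
  · simp only [barycenter, Finsupp.indicator_apply]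
    split_ifs <;> positivity
  · simp [barycenter, hcard]

/-- The open star of a set of vertices: the points in the interior of a simplex containing them. -/
def openStar (G : SimpleGraph V) (s : Finset V) : Set (CliqueComplex G) :=
  {f | s ⊆ f.1.support}

lemma isOpen_openStar (s : Finset V) : IsOpen (openStar G s) := by
  have hs : openStar G s = ⋂ v ∈ s, {f | f.1 v ≠ 0} := by
    ext f
    simp [openStar, Finset.subset_iff]
  rw [hs]
  exact isOpen_biInter_finset fun v _ => isOpen_ne.preimage (continuous_apply v)

lemma openStar_union [DecidableEq V] (s t : Finset V) :
    openStar G (s ∪ t) = openStar G s ∩ openStar G t :=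
  Set.ext fun _ => Finset.union_subset_iff

-- The star is star-shaped about any point `z` whose support is the given clique.
theorem isSimplyConnected_openStar {s : Finset V} (hs : s.Nonempty)
    (hclique : G.IsClique (s : Set V)) : IsSimplyConnected (openStar G s) := by
  obtain ⟨z, rfl⟩ := exists_support_eq hs hclique
  have hstar : StarConvex ℝ (z.1 : V → ℝ)
      ((fun f : CliqueComplex G => (f.1 : V → ℝ)) '' openStar G z.1.support) := by
    rintro _ ⟨f, hzf, rfl⟩ a b ha hb hab
    have hclique' : G.IsClique (z.1.support ∪ f.1.support : Set V) := by
      rw [Set.union_eq_right.2 (Finset.coe_subset.2 hzf)]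
      exact f.2.2.2
    obtain ⟨e, he⟩ := exists_coe_eq_convexCombination z f hclique' ha hb hab
    refine ⟨e, fun v hv => ?_, by simp [he]⟩
    have hpos : 0 < a • z.1 v + b • f.1 v :=
      convex_Ioi (0 : ℝ) (coe_pos hv) (coe_pos (hzf hv)) ha hb hab
    rw [Finsupp.mem_support_iff, he]
    exact hpos.ne'
  have := hstar.contractibleSpace ⟨_, z, Finset.Subset.refl _, rfl⟩
  exact isEmbedding_coe.isSimplyConnected_image.1 (SimplyConnectedSpace.ofContractible _)

theorem isGoodCover_openStar (G : SimpleGraph V) : IsGoodCover G fun v => openStar G {v} where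
  isOpen v := isOpen_openStar {v}
  exists_mem f := by simpa [openStar] using exists_mem_support f
  isSimplyConnected v := isSimplyConnected_openStar (Finset.singleton_nonempty v) (by simp)
  adj {v w f} hv hw hne :=
    f.2.2.2 (Finset.singleton_subset_iff.1 hv) (Finset.singleton_subset_iff.1 hw) hne
  isPathConnected_inter {v w} hvw := by
    classical
    rw [← openStar_union]
    exact (isSimplyConnected_openStar (by simp)
      (by simpa [SimpleGraph.isClique_pair] using fun _ => hvw)).isPathConnected
  exists_mem_of_triangle {u v w} huv hvw huw := by
    classical
    have hclique : G.IsClique (({u, v, w} : Finset V) : Set V) := by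
      simpa using (SimpleGraph.is3Clique_triple_iff.2 ⟨huv, huw, hvw⟩).isClique
    obtain ⟨f, hf⟩ := exists_support_eq (by simp) hclique
    have hmem : ∀ x ∈ ({u, v, w} : Finset V), f ∈ openStar G {x} := fun x hx =>
      Finset.singleton_subset_iff.2 (hf ▸ hx)
    exact ⟨f, hmem u (by simp), hmem v (by simp), hmem w (by simp)⟩

end CliqueComplex

end OpenStar

theorem stmt_15_general {V α : Type*} {G : SimpleGraph V} (hα : 3 ≤ ENat.card α)
    (c : G.Coloring α) (hc : HasColoredCommonNeighbors c 4) :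
    SimplyConnectedSpace (CliqueComplex G) := by
  have : Nonempty α := (ENat.one_le_card_iff_nonempty α).1 ((by norm_num : (1 : ℕ∞) ≤ 3).trans hα)
  obtain ⟨a, -⟩ := hc (Classical.arbitrary α) ∅ (by simp) (by simp)
  have hcover := CliqueComplex.isGoodCover_openStar G
  exact hcover.simplyConnectedSpace (hcover.flatTransport.hasTrivialHolonomy hα hc a)

/-- Let `Γ` be an `n`-colored graph (coloring `c : V → Fin n`, no edges
within a color class) such that (1) every color class has at least two vertices, and
(2) for every color `i` and every choice of `2(n−1)` vertices outside the `i`-th color class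
there are two distinct vertices of color `i` adjacent to all of them. If `n ≥ 3`, then the
clique complex `K(Γ)` is simply connected. -/
theorem stmt_15 {V : Type*} (n : ℕ) (hn : 3 ≤ n) (G : SimpleGraph V) (c : V → Fin n)
    (hcolor : ∀ v w, G.Adj v w → c v ≠ c w)
    (h1 : ∀ i : Fin n, ∃ v w : V, v ≠ w ∧ c v = i ∧ c w = i)
    (h2 : ∀ i : Fin n, ∀ vs : Fin (2 * (n - 1)) → V, (∀ j, c (vs j) ≠ i) →
      ∃ v w : V, v ≠ w ∧ c v = i ∧ c w = i ∧ ∀ j, G.Adj v (vs j) ∧ G.Adj w (vs j)) :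
    SimplyConnectedSpace (CliqueComplex G) := by
  have hc : HasColoredCommonNeighbors (SimpleGraph.Coloring.mk c fun h => hcolor _ _ h)
      (2 * (n - 1)) :=
    hasColoredCommonNeighbors_of_forall_fin (fun i => (h1 i).imp fun _ ⟨_, _, hv, _⟩ => hv)
      fun i vs hvs => (h2 i vs hvs).imp fun _ ⟨_, _, hv, _, hadj⟩ => ⟨hv, fun j => (hadj j).1⟩
  exact stmt_15_general (by simpa using hn) _ (hc.mono (by lia))
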